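/- arXiv:1712.08810 — 2 statements merged into one kernel-verified Lean document; each statement's English description precedes it below -/
import Mathlib

section
/- Let m ≥ 1 and let a^{(1)}, ..., a^{(m)} : ℕ → ℤ be integer sequences that are simultaneously eventually periodic, i.e., there exist N ≥ 0 and q ≥ 1 such that a^{(j)}_{n+q} = a^{(j)}_n for all n ≥ N and all j = 1, ..., m. Then there exist k ≥ 1, integers c_1, ..., c_k, and N' ≥ 0 such that for every i = 1, ..., m+1 and every n ≥ N', the convergent sequence satisfies A^{(i)}_{n+k} = c_1·A^{(i)}_{n+k-1} + ⋯ + c_k·A^{(i)}_n. In particular, each sequence (A^{(i)}_n) is a linear recurrence sequence. -/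
/-- The convergent numerator/denominator sequences `A⁽ⁱ⁾` of a multidimensional
continued fraction with partial quotient sequences `a⁽¹⁾, …, a⁽ᵐ⁾`, with the
index shifted by `m`:  `convA m a i n` is `A⁽ⁱ⁺¹⁾_{n - m}` of the paper. -/
def convA (m : ℕ) (a : Fin m → ℕ → ℤ) (i : Fin (m + 1)) : ℕ → ℤ
  | n =>
    if h : n ≤ m then
      if n = m then
        if hi : (i : ℕ) < m then a ⟨i, hi⟩ 0 else 1
      else
        if (i : ℕ) = m then 0 else if n = m - 1 - (i : ℕ) then 1 else 0
    else
      (∑ j : Fin m, a j (n - m) * convA m a i (n - ((j : ℕ) + 1))) +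
        convA m a i (n - (m + 1))
  termination_by n => n
  decreasing_by all_goals omega

open Polynomial

/-- The left shift `s ↦ (n ↦ s (n + 1))` on integer sequences. -/
def seqShift : Module.End ℤ (ℕ → ℤ) := LinearMap.funLeft ℤ ℤ (· + 1)

theorem seqShift_pow_apply (i : ℕ) (s : ℕ → ℤ) (n : ℕ) : (seqShift ^ i) s n = s (n + i) := by
  induction i generalizing n with
  | zero => simp
  | succ i ih =>
    rw [pow_succ', Module.End.mul_apply]
    change (seqShift ^ i) s (n + 1) = _
    rw [ih]
    congr 1
    omega

theorem aeval_seqShift_apply (p : ℤ[X]) (s : ℕ → ℤ) (n : ℕ) :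
    aeval seqShift p s n = ∑ i ∈ Finset.range (p.natDegree + 1), p.coeff i * s (n + i) := by
  simp [aeval_eq_sum_range, LinearMap.sum_apply, Finset.sum_apply, seqShift_pow_apply]

/-- The sequences solving the order `m + 1` linear recurrence with variable coefficients `b`. -/
def recurrenceSolutions (m : ℕ) (b : Fin m → ℕ → ℤ) : Submodule ℤ (ℕ → ℤ) where
  carrier := {s | ∀ n, s (n + m + 1) = ∑ j : Fin m, b j n * s (n + m - j) + s n}
  zero_mem' := by simp
  add_mem' {s t} hs ht n := by
    simp only [Pi.add_apply, hs n, ht n, mul_add, Finset.sum_add_distrib]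
    ring
  smul_mem' r s hs n := by
    simp only [Pi.smul_apply, smul_eq_mul, hs n, mul_add, Finset.mul_sum]
    congr 1
    exact Finset.sum_congr rfl fun _ _ => by ring

theorem mem_recurrenceSolutions {m : ℕ} {b : Fin m → ℕ → ℤ} {s : ℕ → ℤ} :
    s ∈ recurrenceSolutions m b ↔
      ∀ n, s (n + m + 1) = ∑ j : Fin m, b j n * s (n + m - j) + s n :=
  Iff.rfl

theorem eq_zero_of_mem_recurrenceSolutions {m : ℕ} {b : Fin m → ℕ → ℤ} {s : ℕ → ℤ}
    (hs : s ∈ recurrenceSolutions m b) (h0 : ∀ n ≤ m, s n = 0) (n : ℕ) : s n = 0 := by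
  induction n using Nat.strong_induction_on with
  | _ n ih =>
    rcases le_or_gt n m with h | h
    · exact h0 n h
    · obtain ⟨k, rfl⟩ : ∃ k, n = k + m + 1 := ⟨n - m - 1, by omega⟩
      rw [hs k, ih k (by omega), add_zero]
      exact Finset.sum_eq_zero fun j _ => by rw [ih _ (by omega), mul_zero]

instance recurrenceSolutions_finite (m : ℕ) (b : Fin m → ℕ → ℤ) :
    Module.Finite ℤ (recurrenceSolutions m b) := by
  let f : recurrenceSolutions m b →ₗ[ℤ] (Fin (m + 1) → ℤ) :=
    LinearMap.funLeft ℤ ℤ (fun i : Fin (m + 1) => (i : ℕ)) ∘ₗ (recurrenceSolutions m b).subtype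
  refine Module.Finite.of_injective f ((injective_iff_map_eq_zero f).2 fun s hs => ?_)
  ext n
  exact eq_zero_of_mem_recurrenceSolutions s.2
    (fun k hk => congrFun hs (⟨k, by omega⟩ : Fin (m + 1))) n

theorem seqShift_pow_mem_recurrenceSolutions {m q : ℕ} {b : Fin m → ℕ → ℤ}
    (hb : ∀ j n, b j (n + q) = b j n) {s : ℕ → ℤ} (hs : s ∈ recurrenceSolutions m b) :
    (seqShift ^ q) s ∈ recurrenceSolutions m b := by
  intro n
  simp only [seqShift_pow_apply]
  rw [show n + m + 1 + q = (n + q) + m + 1 by omega, hs (n + q)]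
  congr 1
  refine Finset.sum_congr rfl fun j _ => ?_
  rw [hb, show n + q + m - (j : ℕ) = n + m - j + q by omega]

theorem aeval_restrict_apply {R M : Type*} [CommRing R] [AddCommGroup M] [Module R M]
    {W : Submodule R M} {f : Module.End R M} (hf : ∀ x ∈ W, f x ∈ W) (p : R[X]) (x : W) :
    (aeval (f.restrict hf) p x : M) = aeval f p x := by
  simp only [aeval_eq_sum_range, LinearMap.sum_apply, LinearMap.smul_apply,
    Submodule.coe_sum, Submodule.coe_smul]
  refine Finset.sum_congr rfl fun i _ => ?_
  rw [Module.End.pow_restrict, LinearMap.coe_restrict_apply]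

/-- All solutions of a recurrence with `q`-periodic coefficients are annihilated by one monic
polynomial of positive degree in the shift. -/
theorem exists_monic_aeval_seqShift_eq_zero {m q : ℕ} (hq : 1 ≤ q) {b : Fin m → ℕ → ℤ}
    (hb : ∀ j n, b j (n + q) = b j n) :
    ∃ P : ℤ[X], P.Monic ∧ 1 ≤ P.natDegree ∧
      ∀ s ∈ recurrenceSolutions m b, aeval seqShift P s = 0 := by
  obtain ⟨p, hp, h⟩ := LinearMap.exists_monic_and_aeval_eq_zero ℤ
    ((seqShift ^ q).restrict fun s hs => seqShift_pow_mem_recurrenceSolutions hb hs)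
  have hpq : (expand ℤ q p).Monic := hp.expand (by omega)
  refine ⟨X * expand ℤ q p, monic_X.mul hpq, ?_, fun s hs => ?_⟩
  · rw [natDegree_X_mul hpq.ne_zero]
    omega
  · have h0 := aeval_restrict_apply
      (fun s hs => seqShift_pow_mem_recurrenceSolutions hb hs) p ⟨s, hs⟩
    rw [h] at h0
    rw [map_mul, Module.End.mul_apply, expand_aeval, ← h0]
    simp

theorem convA_add_mem_recurrenceSolutions (m : ℕ) (a : Fin m → ℕ → ℤ) (i : Fin (m + 1)) (N : ℕ) :
    (fun n => convA m a i (n + N)) ∈ recurrenceSolutions m (fun j n => a j (n + 1 + N)) := by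
  rw [mem_recurrenceSolutions]
  intro n
  rw [convA, dif_neg (by omega)]
  congr 1
  · refine Finset.sum_congr rfl fun j _ => ?_
    rw [show n + m + 1 + N - m = n + 1 + N by omega,
      show n + m + 1 + N - ((j : ℕ) + 1) = n + m - j + N by omega]
  · congr 1
    omega

/-- If the sequences of partial quotients of a multidimensional continued fraction
are (simultaneously eventually) periodic, then the numerators and denominators of
its convergents are linear recurrence sequences: there are `k ≥ 1`, integers
`c 0, …, c (k-1)` and an index `N'` such that for every `i` and all `n ≥ N'`,
`A⁽ⁱ⁾_{n+k} = c 0 • A⁽ⁱ⁾_{n+k-1} + ⋯ + c (k-1) • A⁽ⁱ⁾_n`. -/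
theorem convA_linear_recurrence_of_periodic (m : ℕ) (hm : 1 ≤ m) (a : Fin m → ℕ → ℤ)
    (N q : ℕ) (hq : 1 ≤ q) (hper : ∀ j : Fin m, ∀ n, N ≤ n → a j (n + q) = a j n) :
    ∃ k : ℕ, 1 ≤ k ∧ ∃ c : Fin k → ℤ, ∃ N' : ℕ,
      ∀ i : Fin (m + 1), ∀ n, N' ≤ n →
        convA m a i (n + k) = ∑ t : Fin k, c t * convA m a i (n + k - 1 - (t : ℕ)) := by
  obtain ⟨P, hP, hk, h⟩ := exists_monic_aeval_seqShift_eq_zero (m := m) hq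
    (b := fun j n => a j (n + 1 + N)) fun j n => by
      rw [show n + q + 1 + N = n + 1 + N + q by omega, hper j _ (by omega)]
  refine ⟨P.natDegree, hk, fun t => -P.coeff (P.natDegree - 1 - t), N, fun i n hn => ?_⟩
  obtain ⟨n, rfl⟩ := Nat.exists_eq_add_of_le' hn
  have h0 := congrFun (h _ (convA_add_mem_recurrenceSolutions m a i N)) n
  rw [aeval_seqShift_apply, Finset.sum_range_succ, hP.coeff_natDegree, one_mul,
    Pi.zero_apply, ← Finset.sum_range_reflect, ← Fin.sum_univ_eq_sum_range
      (fun t => P.coeff (P.natDegree - 1 - t) *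
        convA m a i (n + (P.natDegree - 1 - t) + N))] at h0
  rw [show n + N + P.natDegree = n + P.natDegree + N by omega, eq_neg_of_add_eq_zero_right h0,
    ← Finset.sum_neg_distrib]
  refine Finset.sum_congr rfl fun t _ => ?_
  rw [neg_mul, show n + P.natDegree + N - 1 - (t : ℕ) = n + (P.natDegree - 1 - t) + N by omega]
end

section
/- Let K be a field and let (a_n) and (b_n) be sequences in K annihilated by monic polynomials p(x) and q(x) of degrees d ≥ 1 and e ≥ 1 respectively. Then the product sequence (a_n · b_n) is annihilated by the characteristic polynomial of the Kronecker (tensor) product C_p ⊗ C_q, where C_p and C_q are the companion matrices of p and q. In particular, (a_n · b_n) satisfies a linear recurrence of order d·e with constant coefficients. -/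
open Kronecker

/-- A monic polynomial `f = xᵏ − c₁xᵏ⁻¹ − ⋯ − c_k` annihilates a sequence `s` if
`s (n+k) = c₁ • s (n+k-1) + ⋯ + c_k • s n` for all `n ≥ 0`; equivalently,
`∑_{i=0}^{k} (coeff f i) • s (n+i) = 0` for all `n`. -/
def Annihilates {K : Type*} [CommRing K] (f : Polynomial K) (s : ℕ → K) : Prop :=
  ∀ n : ℕ, ∑ i ∈ Finset.range (f.natDegree + 1), f.coeff i * s (n + i) = 0

/-- The companion matrix of a monic polynomial `f` of degree `d`: the `d × d` matrix
with `1`'s on the subdiagonal and last column the negated lower-order coefficients. -/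
def companionMatrix {K : Type*} [CommRing K] (d : ℕ) (f : Polynomial K) :
    Matrix (Fin d) (Fin d) K :=
  Matrix.of fun i j =>
    if (i : ℕ) = (j : ℕ) + 1 then 1
    else if (j : ℕ) = d - 1 then -f.coeff i else 0

open Matrix in
theorem vecMul_pow_of_vecMul_eq_succ {K ι : Type*} [CommRing K] [Fintype ι] [DecidableEq ι]
    {M : Matrix ι ι K} {w : ℕ → ι → K} (hw : ∀ n, w n ᵥ* M = w (n + 1)) (n k : ℕ) :
    w n ᵥ* M ^ k = w (n + k) := by
  induction k with
  | zero => simp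
  | succ k ih => rw [pow_succ, ← Matrix.vecMul_vecMul, ih, hw, add_assoc]

open Matrix in
/-- By Cayley–Hamilton, each coordinate of an orbit of `M` is annihilated by its characteristic
polynomial. -/
theorem annihilates_charpoly_of_vecMul_eq_succ {K ι : Type*} [CommRing K] [Fintype ι]
    [DecidableEq ι] {M : Matrix ι ι K} {w : ℕ → ι → K} (hw : ∀ n, w n ᵥ* M = w (n + 1)) (i : ι) :
    Annihilates M.charpoly (fun n => w n i) := by
  intro n
  have h := congrArg (fun N => (w n ᵥ* N) i) M.aeval_self_charpoly
  simpa [Polynomial.aeval_eq_sum_range, Matrix.vecMul_sum, Matrix.vecMul_smul,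
    vecMul_pow_of_vecMul_eq_succ hw] using h

open Matrix in
/-- The companion matrix shifts the window of `d` consecutive terms of an annihilated sequence. -/
theorem vecMul_companionMatrix {K : Type*} [CommRing K] {d : ℕ} {p : Polynomial K}
    (hp : p.Monic) (hpd : p.natDegree = d) {a : ℕ → K} (ha : Annihilates p a) (n : ℕ) :
    (fun i : Fin d => a (n + i)) ᵥ* companionMatrix d p = fun i : Fin d => a (n + 1 + i) := by
  ext j
  simp only [Matrix.vecMul, dotProduct, companionMatrix, Matrix.of_apply]
  by_cases hj : (j : ℕ) = d - 1
  · have h := ha n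
    rw [Finset.sum_range_succ, hp.coeff_natDegree, one_mul, hpd, Finset.sum_range] at h
    have hjd : n + 1 + (j : ℕ) = n + d := by omega
    rw [hjd, eq_neg_of_add_eq_zero_right h, ← Finset.sum_neg_distrib]
    refine Finset.sum_congr rfl fun i _ => ?_
    rw [if_neg (by omega), if_pos hj]
    ring
  · rw [Finset.sum_eq_single (⟨j + 1, by omega⟩ : Fin d)]
    · simp [add_assoc, add_comm 1]
    · intro i _ hi
      rw [if_neg (fun h => hi (Fin.ext h)), if_neg hj, mul_zero]
    · simp

open Matrix in
theorem vecMul_kronecker_mul {K ι κ : Type*} [CommRing K] [Fintype ι] [Fintype κ]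
    (u : ι → K) (v : κ → K) (A : Matrix ι ι K) (B : Matrix κ κ K) :
    (fun x : ι × κ => u x.1 * v x.2) ᵥ* (A ⊗ₖ B) =
      fun x => (u ᵥ* A) x.1 * (v ᵥ* B) x.2 := by
  ext x
  simp only [Matrix.vecMul, dotProduct, Matrix.kroneckerMap_apply, Finset.sum_mul_sum,
    Fintype.sum_prod_type, mul_mul_mul_comm]

/-- If `(aₙ)` and `(bₙ)` are annihilated by monic polynomials `p`, `q` of degrees
`d, e ≥ 1`, then the product sequence `(aₙ · bₙ)` is annihilated by the characteristic
polynomial of the Kronecker product `C_p ⊗ C_q` of the companion matrices; in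
particular it satisfies a linear recurrence of order `d * e` with constant
coefficients, since that characteristic polynomial is monic of degree `d * e`. -/
theorem annihilates_charpoly_kronecker_of_mul {K : Type*} [Field K] (d e : ℕ)
    (hd : 1 ≤ d) (he : 1 ≤ e) (p q : Polynomial K) (hp : p.Monic) (hq : q.Monic)
    (hpd : p.natDegree = d) (hqe : q.natDegree = e) (a b : ℕ → K)
    (ha : Annihilates p a) (hb : Annihilates q b) :
    ((companionMatrix d p ⊗ₖ companionMatrix e q).charpoly).natDegree = d * e ∧
      Annihilates ((companionMatrix d p ⊗ₖ companionMatrix e q).charpoly)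
        (fun n => a n * b n) := by
  refine ⟨by simp [Matrix.charpoly_natDegree_eq_dim], ?_⟩
  have h := annihilates_charpoly_of_vecMul_eq_succ
    (M := companionMatrix d p ⊗ₖ companionMatrix e q)
    (w := fun n x => a (n + x.1) * b (n + x.2))
    (fun n => by
      rw [vecMul_kronecker_mul (fun i : Fin d => a (n + i)) (fun j : Fin e => b (n + j)),
        vecMul_companionMatrix hp hpd ha, vecMul_companionMatrix hq hqe hb])
    (⟨0, hd⟩, ⟨0, he⟩)
  simpa using h
end
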